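/- arXiv:1607.05527 — 8 statements merged into one kernel-verified Lean document; each statement's English description precedes it below -/
import Mathlib

section
/- Let M ≥ 1 be an integer and L = 20M. Let v₁ ≠ v₂, u₁ ≠ u₂, w₁ ≠ w₂ be points of the Euclidean plane whose coordinates are integers in {1, …, M}. Suppose the lines line(v₁,v₂) and line(u₁,u₂) are not parallel and let p be their intersection point. If p does not lie on the line line(w₁,w₂), then the Euclidean distance from p to line(w₁,w₂) is at least L⁻⁵. -/
/-!
Write `x × y = x 0 * y 1 - x 1 * y 0` for the planar cross product, and put `d = v₂ - v₁`,
`e = u₂ - u₁`, `f = w₂ - w₁`. Cramer's rule gives `p = v₁ + t d` with `(d × e) t = (u₁ - v₁) × e`,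
so `(d × e) * (f × (p - w₁))` is an integer. It is nonzero because the first two lines are not
parallel and `p` is not on the third one; hence it has absolute value at least `1`.
Since `|d × e| ≤ 2M²`, this yields `1 ≤ 2M² |f × (p - w₁)|`. For every `q` on `line w₁ w₂`,
`|f × (p - w₁)| = |f × (p - q)| ≤ 2M * dist p q`, so `1 ≤ 4M³ * dist p q`, which is more than enough.
-/


/-- A point of the Euclidean plane both of whose coordinates are integers in `{1, …, M}`. -/
def MBoundedPoint (M : ℕ) (p : EuclideanSpace ℝ (Fin 2)) : Prop :=
  ∃ a b : ℤ, 1 ≤ a ∧ a ≤ (M : ℤ) ∧ 1 ≤ b ∧ b ≤ (M : ℤ) ∧ p 0 = a ∧ p 1 = b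

/-- The line through two points `u` and `v` of the Euclidean plane. -/
def line (u v : EuclideanSpace ℝ (Fin 2)) : Set (EuclideanSpace ℝ (Fin 2)) :=
  {p | ∃ t : ℝ, p = u + t • (v - u)}

/-- The cross product (signed parallelogram area) of two plane vectors. -/
def cross (x y : EuclideanSpace ℝ (Fin 2)) : ℝ := x 0 * y 1 - x 1 * y 0

lemma cross_ne_zero_of_linearIndependent {d e : EuclideanSpace ℝ (Fin 2)}
    (h : LinearIndependent ℝ ![d, e]) : cross d e ≠ 0 := by
  intro h0
  unfold cross at h0
  rw [LinearIndependent.pair_iff] at h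
  have h1 := h (e 1) (-d 1) (by ext i; fin_cases i <;> simp <;> linarith)
  have h2 := h (e 0) (-d 0) (by ext i; fin_cases i <;> simp <;> linarith)
  have h3 := h 0 1 (by ext i; fin_cases i <;> simp [h1.1, h2.1])
  exact one_ne_zero h3.2

lemma mem_line_of_cross_eq_zero {w₁ w₂ p : EuclideanSpace ℝ (Fin 2)} (hne : w₁ ≠ w₂)
    (h : cross (w₂ - w₁) (p - w₁) = 0) : p ∈ line w₁ w₂ := by
  simp only [cross, PiLp.sub_apply] at h
  -- Divide by a coordinate of `w₂ - w₁` that does not vanish.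
  by_cases h0 : w₂ 0 - w₁ 0 = 0
  · have h1 : w₂ 1 - w₁ 1 ≠ 0 := by
      intro h1
      apply hne
      ext i
      fin_cases i <;> simp <;> linarith
    refine ⟨(p 1 - w₁ 1) / (w₂ 1 - w₁ 1), ?_⟩
    ext i
    fin_cases i <;> simp <;> field_simp <;> linarith
  · refine ⟨(p 0 - w₁ 0) / (w₂ 0 - w₁ 0), ?_⟩
    ext i
    fin_cases i <;> simp <;> field_simp <;> linarith

lemma abs_cross_le {x y : EuclideanSpace ℝ (Fin 2)} {K : ℝ} (h0 : |x 0| ≤ K) (h1 : |x 1| ≤ K) :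
    |cross x y| ≤ 2 * K * ‖y‖ := by
  have hy0 : |y 0| ≤ ‖y‖ := PiLp.norm_apply_le y 0
  have hy1 : |y 1| ≤ ‖y‖ := PiLp.norm_apply_le y 1
  have hK : 0 ≤ K := (abs_nonneg _).trans h0
  calc |cross x y| ≤ |x 0 * y 1| + |x 1 * y 0| := abs_sub _ _
    _ = |x 0| * |y 1| + |x 1| * |y 0| := by rw [abs_mul, abs_mul]
    _ ≤ K * ‖y‖ + K * ‖y‖ := by gcongr
    _ = 2 * K * ‖y‖ := by ring

lemma MBoundedPoint.abs_sub_le {M : ℕ} {u v : EuclideanSpace ℝ (Fin 2)}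
    (hu : MBoundedPoint M u) (hv : MBoundedPoint M v) (i : Fin 2) : |(u - v) i| ≤ M := by
  obtain ⟨a, b, ha, ha', hb, hb', h0, h1⟩ := hu
  obtain ⟨c, d, hc, hc', hd, hd', k0, k1⟩ := hv
  rify at ha ha' hb hb' hc hc' hd hd'
  rw [abs_le]
  fin_cases i <;> simp [h0, h1, k0, k1] <;> constructor <;> linarith

lemma MBoundedPoint.abs_cross_sub_le {M : ℕ} {u v u' v' : EuclideanSpace ℝ (Fin 2)}
    (hu : MBoundedPoint M u) (hv : MBoundedPoint M v)
    (hu' : MBoundedPoint M u') (hv' : MBoundedPoint M v') :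
    |cross (u - v) (u' - v')| ≤ 2 * (M : ℝ) ^ 2 := by
  calc |cross (u - v) (u' - v')|
      ≤ |(u - v) 0 * (u' - v') 1| + |(u - v) 1 * (u' - v') 0| := abs_sub _ _
    _ = |(u - v) 0| * |(u' - v') 1| + |(u - v) 1| * |(u' - v') 0| := by rw [abs_mul, abs_mul]
    _ ≤ M * M + M * M := by
      gcongr <;> first | exact hu.abs_sub_le hv _ | exact hu'.abs_sub_le hv' _
    _ = 2 * (M : ℝ) ^ 2 := by ring

lemma MBoundedPoint.exists_int_cross_sub {M : ℕ} {u v u' v' : EuclideanSpace ℝ (Fin 2)}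
    (hu : MBoundedPoint M u) (hv : MBoundedPoint M v)
    (hu' : MBoundedPoint M u') (hv' : MBoundedPoint M v') :
    ∃ n : ℤ, cross (u - v) (u' - v') = n := by
  obtain ⟨a, b, -, -, -, -, h0, h1⟩ := hu
  obtain ⟨c, d, -, -, -, -, k0, k1⟩ := hv
  obtain ⟨a', b', -, -, -, -, h0', h1'⟩ := hu'
  obtain ⟨c', d', -, -, -, -, k0', k1'⟩ := hv'
  refine ⟨(a - c) * (b' - d') - (b - d) * (a' - c'), ?_⟩
  simp [cross, h0, h1, k0, k1, h0', h1', k0', k1']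

/-- Cramer's rule for the intersection point of two lines, paired with a third direction `f`:
the right-hand side involves only cross products of differences of the given points. -/
lemma cross_mul_cross_of_mem_line {v₁ v₂ u₁ u₂ w₁ f p : EuclideanSpace ℝ (Fin 2)}
    (hp₁ : p ∈ line v₁ v₂) (hp₂ : p ∈ line u₁ u₂) :
    cross (v₂ - v₁) (u₂ - u₁) * cross f (p - w₁) =
      cross (v₂ - v₁) (u₂ - u₁) * cross f (v₁ - w₁) +
        cross (u₁ - v₁) (u₂ - u₁) * cross f (v₂ - v₁) := by
  obtain ⟨t, ht⟩ := hp₁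
  obtain ⟨s, hs⟩ := hp₂
  have hT : t * cross (v₂ - v₁) (u₂ - u₁) = cross (u₁ - v₁) (u₂ - u₁) := by
    have e := ht.symm.trans hs
    have e0 := congrArg (fun q : EuclideanSpace ℝ (Fin 2) => q 0) e
    have e1 := congrArg (fun q : EuclideanSpace ℝ (Fin 2) => q 1) e
    simp at e0 e1
    simp only [cross, PiLp.sub_apply]
    linear_combination (u₂ 1 - u₁ 1) * e0 - (u₂ 0 - u₁ 0) * e1
  rw [← hT, ht]
  simp [cross]
  ring

/-- Let `M ≥ 1` and `L = 20M`. If `p` is the intersection point of the two non-parallel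
lines `line(v₁,v₂)` and `line(u₁,u₂)` spanned by `M`-bounded points, and `p` does not lie
on the line `line(w₁,w₂)` spanned by `M`-bounded points, then the distance from `p` to
`line(w₁,w₂)` is at least `L⁻⁵`. -/
theorem dist_intersection_to_line_ge
    (M : ℕ) (hM : 1 ≤ M) (L : ℝ) (hL : L = 20 * M)
    (v₁ v₂ u₁ u₂ w₁ w₂ : EuclideanSpace ℝ (Fin 2))
    (hv₁ : MBoundedPoint M v₁) (hv₂ : MBoundedPoint M v₂)
    (hu₁ : MBoundedPoint M u₁) (hu₂ : MBoundedPoint M u₂)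
    (hw₁ : MBoundedPoint M w₁) (hw₂ : MBoundedPoint M w₂)
    (hvne : v₁ ≠ v₂) (hune : u₁ ≠ u₂) (hwne : w₁ ≠ w₂)
    (hpar : LinearIndependent ℝ ![v₂ - v₁, u₂ - u₁])
    (p : EuclideanSpace ℝ (Fin 2))
    (hp₁ : p ∈ line v₁ v₂) (hp₂ : p ∈ line u₁ u₂)
    (hpl : p ∉ line w₁ w₂) :
    (L ^ 5)⁻¹ ≤ Metric.infDist p (line w₁ w₂) := by
  have hM' : (1 : ℝ) ≤ M := by exact_mod_cast hM
  have hdet : 1 ≤ 2 * (M : ℝ) ^ 2 * |cross (w₂ - w₁) (p - w₁)| := by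
    have hne : cross (v₂ - v₁) (u₂ - u₁) * cross (w₂ - w₁) (p - w₁) ≠ 0 :=
      mul_ne_zero (cross_ne_zero_of_linearIndependent hpar)
        fun h => hpl (mem_line_of_cross_eq_zero hwne h)
    have hle : 1 ≤ |cross (v₂ - v₁) (u₂ - u₁) * cross (w₂ - w₁) (p - w₁)| := by
      rw [cross_mul_cross_of_mem_line hp₁ hp₂] at hne ⊢
      obtain ⟨a, ha⟩ := hv₂.exists_int_cross_sub hv₁ hu₂ hu₁
      obtain ⟨b, hb⟩ := hw₂.exists_int_cross_sub hw₁ hv₁ hw₁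
      obtain ⟨c, hc⟩ := hu₁.exists_int_cross_sub hv₁ hu₂ hu₁
      obtain ⟨d, hd⟩ := hw₂.exists_int_cross_sub hw₁ hv₂ hv₁
      rw [ha, hb, hc, hd] at hne ⊢
      norm_cast at hne ⊢
      exact Int.one_le_abs hne
    rw [abs_mul] at hle
    exact hle.trans (by gcongr; exact hv₂.abs_cross_sub_le hv₁ hu₂ hu₁)
  have hnonempty : (line w₁ w₂).Nonempty := ⟨w₁, 0, by simp⟩
  rw [Metric.le_infDist hnonempty]
  rintro q ⟨t, rfl⟩
  have hq : cross (w₂ - w₁) (p - w₁) =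
      cross (w₂ - w₁) (p - (w₁ + t • (w₂ - w₁))) := by
    simp [cross]
    ring
  rw [dist_eq_norm]
  rw [hq] at hdet
  set y := p - (w₁ + t • (w₂ - w₁))
  have hy : |cross (w₂ - w₁) y| ≤ 2 * M * ‖y‖ :=
    abs_cross_le (hw₂.abs_sub_le hw₁ 0) (hw₂.abs_sub_le hw₁ 1)
  have h4 : 4 * (M : ℝ) ^ 3 ≤ L ^ 5 := by
    have : (M : ℝ) ^ 3 ≤ (M : ℝ) ^ 5 := pow_le_pow_right₀ hM' (by norm_num)
    rw [hL, mul_pow]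
    nlinarith [pow_nonneg (zero_le_one.trans hM') 5]
  have hL0 : 0 < L ^ 5 := by
    rw [hL]
    positivity
  rw [inv_le_iff_one_le_mul₀' hL0]
  calc (1 : ℝ) ≤ 2 * (M : ℝ) ^ 2 * |cross (w₂ - w₁) y| := hdet
    _ ≤ 2 * (M : ℝ) ^ 2 * (2 * M * ‖y‖) := by gcongr
    _ = 4 * (M : ℝ) ^ 3 * ‖y‖ := by ring
    _ ≤ L ^ 5 * ‖y‖ := by gcongr
end

section
/- Let M ≥ 1 be an integer and L = 20M. Let v₁ ≠ v₂, u₁ ≠ u₂, w₁ ≠ w₂, t₁ ≠ t₂ be points of the Euclidean plane whose coordinates are integers in {1, …, M}. Suppose line(v₁,v₂) and line(u₁,u₂) are not parallel with intersection point p, and line(w₁,w₂) and line(t₁,t₂) are not parallel with intersection point q. If p ≠ q, then the Euclidean distance between p and q is at least L⁻⁴. -/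
/-- Cramer's rule: the intersection point of two non-parallel lines spanned by `M`-bounded points
has rational coordinates with a common denominator of absolute value at most `2M²`. -/
theorem exists_int_denominator {M : ℕ} {v₁ v₂ u₁ u₂ p : EuclideanSpace ℝ (Fin 2)}
    (hv₁ : MBoundedPoint M v₁) (hv₂ : MBoundedPoint M v₂)
    (hu₁ : MBoundedPoint M u₁) (hu₂ : MBoundedPoint M u₂)
    (hpar : LinearIndependent ℝ ![v₂ - v₁, u₂ - u₁])
    (hp₁ : p ∈ line v₁ v₂) (hp₂ : p ∈ line u₁ u₂) :
    ∃ D : ℤ, D ≠ 0 ∧ |D| ≤ 2 * (M : ℤ) ^ 2 ∧ ∀ i, ∃ X : ℤ, (D : ℝ) * p i = X := by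
  obtain ⟨a, b, ha, ha', hb, hb', ea, eb⟩ := hv₁
  obtain ⟨c, d, hc, hc', hd, hd', ec, ed⟩ := hv₂
  obtain ⟨e, f, he, he', hf, hf', ee, ef⟩ := hu₁
  obtain ⟨g, h, hg, hg', hh, hh', eg, eh⟩ := hu₂
  obtain ⟨s, hs⟩ := hp₁
  obtain ⟨t, ht⟩ := hp₂
  have s0 : p 0 = a + s * (c - a) := by rw [hs]; simp [ea, ec]
  have s1 : p 1 = b + s * (d - b) := by rw [hs]; simp [eb, ed]
  have t0 : p 0 = e + t * (g - e) := by rw [ht]; simp [ee, eg]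
  have t1 : p 1 = f + t * (h - f) := by rw [ht]; simp [ef, eh]
  have key : s * ((c - a) * (h - f) - (d - b) * (g - e))
      = ((e : ℝ) - a) * (h - f) - (f - b) * (g - e) := by
    linear_combination (h - f : ℝ) * (t0 - s0) - (g - e : ℝ) * (t1 - s1)
  refine ⟨(c - a) * (h - f) - (d - b) * (g - e), ?_, ?_, ?_⟩
  · intro hD
    have hDr : ((c : ℝ) - a) * (h - f) - (d - b) * (g - e) = 0 := by exact_mod_cast hD
    rw [LinearIndependent.pair_iff] at hpar
    -- With zero determinant, both rows of the adjugate give vanishing combinations.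
    have h1 := hpar (h - f) (-(d - b)) (by
      ext i
      fin_cases i
      · simp [ea, ec, ee, eg]; linear_combination hDr
      · simp [eb, ed, ef, eh]; ring)
    have h0 := hpar (g - e) (-(c - a)) (by
      ext i
      fin_cases i
      · simp [ea, ec, ee, eg]; ring
      · simp [eb, ed, ef, eh]; linear_combination -hDr)
    have h2 := hpar 0 1 (by
      ext i
      fin_cases i
      · simpa [ee, eg] using h0.1
      · simpa [ef, eh] using h1.1)
    exact one_ne_zero h2.2
  · have h1 : |(c - a) * (h - f)| ≤ (M : ℤ) * M := by
      rw [abs_mul]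
      exact mul_le_mul (abs_le.2 ⟨by linarith, by linarith⟩) (abs_le.2 ⟨by linarith, by linarith⟩)
        (abs_nonneg _) (by positivity)
    have h2 : |(d - b) * (g - e)| ≤ (M : ℤ) * M := by
      rw [abs_mul]
      exact mul_le_mul (abs_le.2 ⟨by linarith, by linarith⟩) (abs_le.2 ⟨by linarith, by linarith⟩)
        (abs_nonneg _) (by positivity)
    have h3 := abs_sub ((c - a) * (h - f)) ((d - b) * (g - e))
    nlinarith
  · intro i
    fin_cases i
    · refine ⟨a * ((c - a) * (h - f) - (d - b) * (g - e))
        + (c - a) * ((e - a) * (h - f) - (f - b) * (g - e)), ?_⟩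
      push_cast
      simp only [Fin.zero_eta, s0]
      linear_combination (c - a : ℝ) * key
    · refine ⟨b * ((c - a) * (h - f) - (d - b) * (g - e))
        + (d - b) * ((e - a) * (h - f) - (f - b) * (g - e)), ?_⟩
      push_cast
      simp only [Fin.mk_one, s1]
      linear_combination (d - b : ℝ) * key

/-- Let `M ≥ 1` and `L = 20M`. If `p` is the intersection of the non-parallel lines
`line(v₁,v₂)` and `line(u₁,u₂)`, `q` is the intersection of the non-parallel lines
`line(w₁,w₂)` and `line(t₁,t₂)`, all spanned by `M`-bounded points, and `p ≠ q`,
then `dist p q ≥ L⁻⁴`. -/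
theorem dist_intersection_points_ge
    (M : ℕ) (hM : 1 ≤ M) (L : ℝ) (hL : L = 20 * M)
    (v₁ v₂ u₁ u₂ w₁ w₂ t₁ t₂ : EuclideanSpace ℝ (Fin 2))
    (hv₁ : MBoundedPoint M v₁) (hv₂ : MBoundedPoint M v₂)
    (hu₁ : MBoundedPoint M u₁) (hu₂ : MBoundedPoint M u₂)
    (hw₁ : MBoundedPoint M w₁) (hw₂ : MBoundedPoint M w₂)
    (ht₁ : MBoundedPoint M t₁) (ht₂ : MBoundedPoint M t₂)
    (hvne : v₁ ≠ v₂) (hune : u₁ ≠ u₂) (hwne : w₁ ≠ w₂) (htne : t₁ ≠ t₂)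
    (hpar₁ : LinearIndependent ℝ ![v₂ - v₁, u₂ - u₁])
    (hpar₂ : LinearIndependent ℝ ![w₂ - w₁, t₂ - t₁])
    (p q : EuclideanSpace ℝ (Fin 2))
    (hp₁ : p ∈ line v₁ v₂) (hp₂ : p ∈ line u₁ u₂)
    (hq₁ : q ∈ line w₁ w₂) (hq₂ : q ∈ line t₁ t₂)
    (hpq : p ≠ q) :
    (L ^ 4)⁻¹ ≤ dist p q := by
  obtain ⟨D, hD0, hD, hDp⟩ := exists_int_denominator hv₁ hv₂ hu₁ hu₂ hpar₁ hp₁ hp₂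
  obtain ⟨E, hE0, hE, hEq⟩ := exists_int_denominator hw₁ hw₂ ht₁ ht₂ hpar₂ hq₁ hq₂
  obtain ⟨i, hi⟩ : ∃ i, p i ≠ q i := by
    by_contra! hcon
    exact hpq (by ext i; exact hcon i)
  obtain ⟨X, hX⟩ := hDp i
  obtain ⟨Y, hY⟩ := hEq i
  have hdist : |p i - q i| ≤ dist p q := by
    rw [dist_eq_norm]
    simpa using PiLp.norm_apply_le (p - q) i
  have hN : (D : ℝ) * E * (p i - q i) = ((E * X - D * Y : ℤ) : ℝ) := by
    push_cast
    linear_combination (E : ℝ) * hX - (D : ℝ) * hY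
  have hN0 : E * X - D * Y ≠ 0 := by
    intro h0
    rw [h0, Int.cast_zero] at hN
    have hD0' : (D : ℝ) ≠ 0 := by exact_mod_cast hD0
    have hE0' : (E : ℝ) ≠ 0 := by exact_mod_cast hE0
    exact mul_ne_zero (mul_ne_zero hD0' hE0') (sub_ne_zero.2 hi) hN
  have hone : (1 : ℝ) ≤ |(D : ℝ)| * |(E : ℝ)| * |p i - q i| := by
    rw [← abs_mul, ← abs_mul, hN]
    exact_mod_cast Int.one_le_abs hN0
  have hDr : |(D : ℝ)| ≤ 2 * (M : ℝ) ^ 2 := by exact_mod_cast hD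
  have hEr : |(E : ℝ)| ≤ 2 * (M : ℝ) ^ 2 := by exact_mod_cast hE
  have hM' : (1 : ℝ) ≤ M := by exact_mod_cast hM
  have hDE : |(D : ℝ)| * |(E : ℝ)| ≤ L ^ 4 := by
    calc |(D : ℝ)| * |(E : ℝ)| ≤ (2 * (M : ℝ) ^ 2) * (2 * (M : ℝ) ^ 2) := by gcongr
      _ = 4 * (M : ℝ) ^ 4 := by ring
      _ ≤ 160000 * (M : ℝ) ^ 4 := by gcongr; norm_num
      _ = L ^ 4 := by rw [hL]; ring
  have hLpos : 0 < L ^ 4 := by rw [hL]; positivity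
  rw [inv_le_iff_one_le_mul₀' hLpos]
  calc (1 : ℝ) ≤ |(D : ℝ)| * |(E : ℝ)| * |p i - q i| := hone
    _ ≤ L ^ 4 * dist p q := by gcongr
end

section
/- Let M ≥ 1 be an integer and L = 20M. Let v₁ ≠ v₂ and w₁ ≠ w₂ be points of the Euclidean plane whose coordinates are integers in {1, …, M}. Suppose the lines ℓ = line(v₁,v₂) and ℓ' = line(w₁,w₂) are parallel and distinct. Then every point of ℓ is at Euclidean distance at least 1/L from ℓ' (in particular, the distance between the two lines is at least 1/L). -/
/-- Two vectors of the plane with vanishing determinant, the first nonzero, are proportional. -/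
lemma exists_smul_of_det_eq_zero (d x : EuclideanSpace ℝ (Fin 2)) (hd : d ≠ 0)
    (h : d 0 * x 1 - d 1 * x 0 = 0) : ∃ r : ℝ, x = r • d := by
  have hn : d 0 ^ 2 + d 1 ^ 2 ≠ 0 := by
    intro h0
    apply hd
    ext i
    fin_cases i
    · simp; nlinarith [sq_nonneg (d 0), sq_nonneg (d 1)]
    · simp; nlinarith [sq_nonneg (d 0), sq_nonneg (d 1)]
  -- the coefficient of the orthogonal projection onto `d`
  refine ⟨(d 0 * x 0 + d 1 * x 1) / (d 0 ^ 2 + d 1 ^ 2), ?_⟩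
  ext i
  fin_cases i
  · simp only [Fin.zero_eta, PiLp.smul_apply, smul_eq_mul]
    field_simp
    linear_combination (-d 1) * h
  · simp only [Fin.mk_one, PiLp.smul_apply, smul_eq_mul]
    field_simp
    linear_combination (d 0) * h

lemma det_eq_zero_of_not_linearIndependent (e d : EuclideanSpace ℝ (Fin 2))
    (h : ¬ LinearIndependent ℝ ![e, d]) : d 0 * e 1 - d 1 * e 0 = 0 := by
  by_contra hdet
  apply h
  rw [LinearIndependent.pair_iff]
  intro s t hst
  have h0 : s * e 0 + t * d 0 = 0 := by simpa using congrArg (fun z => z 0) hst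
  have h1 : s * e 1 + t * d 1 = 0 := by simpa using congrArg (fun z => z 1) hst
  constructor
  · apply (mul_eq_zero.mp _).resolve_right hdet
    linear_combination d 0 * h1 - d 1 * h0
  · apply (mul_eq_zero.mp _).resolve_right hdet
    linear_combination e 1 * h0 - e 0 * h1

/-- A line with direction `s • (w₂ - w₁)`, `s ≠ 0`, whose base point lies on `line w₁ w₂`
is `line w₁ w₂`. -/
lemma line_eq_of_smul (v₁ v₂ w₁ w₂ : EuclideanSpace ℝ (Fin 2)) (s r : ℝ) (hs : s ≠ 0)
    (he : v₂ - v₁ = s • (w₂ - w₁)) (hr : v₁ - w₁ = r • (w₂ - w₁)) :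
    line v₁ v₂ = line w₁ w₂ := by
  have hv : v₁ = w₁ + r • (w₂ - w₁) := by rw [← hr]; abel
  ext p
  simp only [line, Set.mem_ofPred_eq, he]
  constructor
  · rintro ⟨t, rfl⟩
    refine ⟨r + t * s, ?_⟩
    conv_lhs => rw [hv]
    module
  · rintro ⟨t, rfl⟩
    refine ⟨(t - r) / s, ?_⟩
    conv_rhs => rw [hv]
    rw [smul_smul, div_mul_cancel₀ _ hs]
    module

/-- Let `M ≥ 1` and `L = 20M`. If `ℓ = line(v₁,v₂)` and `ℓ' = line(w₁,w₂)` are parallel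
and distinct lines spanned by `M`-bounded points, then every point of `ℓ` is at distance
at least `1/L` from `ℓ'`. -/
theorem dist_parallel_lines_ge
    (M : ℕ) (hM : 1 ≤ M) (L : ℝ) (hL : L = 20 * M)
    (v₁ v₂ w₁ w₂ : EuclideanSpace ℝ (Fin 2))
    (hv₁ : MBoundedPoint M v₁) (hv₂ : MBoundedPoint M v₂)
    (hw₁ : MBoundedPoint M w₁) (hw₂ : MBoundedPoint M w₂)
    (hvne : v₁ ≠ v₂) (hwne : w₁ ≠ w₂)
    (hpar : ¬ LinearIndependent ℝ ![v₂ - v₁, w₂ - w₁])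
    (hdistinct : line v₁ v₂ ≠ line w₁ w₂) :
    ∀ p ∈ line v₁ v₂, 1 / L ≤ Metric.infDist p (line w₁ w₂) := by
  have hd : w₂ - w₁ ≠ 0 := sub_ne_zero.mpr hwne.symm
  obtain ⟨s, hs⟩ := exists_smul_of_det_eq_zero _ _ hd
    (det_eq_zero_of_not_linearIndependent _ _ hpar)
  have hs0 : s ≠ 0 := by
    rintro rfl
    rw [zero_smul, sub_eq_zero] at hs
    exact hvne hs.symm
  have hc : (w₂ 0 - w₁ 0) * (v₁ 1 - w₁ 1) - (w₂ 1 - w₁ 1) * (v₁ 0 - w₁ 0) ≠ 0 := by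
    intro h
    obtain ⟨r, hr⟩ := exists_smul_of_det_eq_zero (w₂ - w₁) (v₁ - w₁) hd (by simpa using h)
    exact hdistinct (line_eq_of_smul v₁ v₂ w₁ w₂ s r hs0 hs hr)
  obtain ⟨a, b, -, -, -, -, ha, hb⟩ := hv₁
  obtain ⟨x, y, hx1, hxM, hy1, hyM, hx, hy⟩ := hw₁
  obtain ⟨x', y', hx1', hxM', hy1', hyM', hx', hy'⟩ := hw₂
  have hM0 : (1 : ℝ) ≤ M := by exact_mod_cast hM
  -- a nonzero integer has square at least one
  have hc1 : 1 ≤ ((w₂ 0 - w₁ 0) * (v₁ 1 - w₁ 1) - (w₂ 1 - w₁ 1) * (v₁ 0 - w₁ 0)) ^ 2 := by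
    rw [ha, hb, hx, hy, hx', hy'] at hc ⊢
    have hz : (x' - x) * (b - y) - (y' - y) * (a - x) ≠ 0 := by
      intro h
      have h' : ((x' : ℝ) - x) * (b - y) - (y' - y) * (a - x) = 0 := by exact_mod_cast h
      exact hc h'
    have hz1 : 1 ≤ ((x' - x) * (b - y) - (y' - y) * (a - x)) ^ 2 :=
      Int.add_one_le_iff.mpr (sq_pos_of_ne_zero hz)
    have hz2 : 1 ≤ (((x' : ℝ) - x) * (b - y) - (y' - y) * (a - x)) ^ 2 := by exact_mod_cast hz1
    exact hz2
  have hd0 : (w₂ 0 - w₁ 0) ^ 2 ≤ (M : ℝ) ^ 2 := by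
    rw [hx, hx']
    have h : (x' - x) ^ 2 ≤ (M : ℤ) ^ 2 := sq_le_sq' (by lia) (by lia)
    have h' : ((x' : ℝ) - x) ^ 2 ≤ (M : ℝ) ^ 2 := by exact_mod_cast h
    exact h'
  have hd1 : (w₂ 1 - w₁ 1) ^ 2 ≤ (M : ℝ) ^ 2 := by
    rw [hy, hy']
    have h : (y' - y) ^ 2 ≤ (M : ℤ) ^ 2 := sq_le_sq' (by lia) (by lia)
    have h' : ((y' : ℝ) - y) ^ 2 ≤ (M : ℝ) ^ 2 := by exact_mod_cast h
    exact h'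
  rintro p ⟨t, rfl⟩
  have hne : (line w₁ w₂).Nonempty := ⟨w₁, 0, by simp⟩
  refine (Metric.le_infDist hne).mpr ?_
  rintro q ⟨u, rfl⟩
  rw [hs, EuclideanSpace.dist_eq]
  apply Real.le_sqrt_of_sq_le
  simp only [Fin.sum_univ_two, PiLp.add_apply, PiLp.smul_apply, PiLp.sub_apply, smul_eq_mul,
    Real.dist_eq, sq_abs, hL]
  generalize w₂ 0 - w₁ 0 = d0 at *
  generalize w₂ 1 - w₁ 1 = d1 at *
  set X := v₁ 0 + t * (s * d0) - (w₁ 0 + u * d0) with hX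
  set Y := v₁ 1 + t * (s * d1) - (w₁ 1 + u * d1) with hY
  have hdet : d0 * (v₁ 1 - w₁ 1) - d1 * (v₁ 0 - w₁ 0) = d0 * Y - d1 * X := by
    rw [hX, hY]; ring
  rw [hdet] at hc1
  have hlag : 1 ≤ (d0 ^ 2 + d1 ^ 2) * (X ^ 2 + Y ^ 2) := by
    nlinarith [sq_nonneg (d0 * X + d1 * Y)]
  have hbound : 1 ≤ (2 * (M : ℝ) ^ 2) * (X ^ 2 + Y ^ 2) :=
    hlag.trans (mul_le_mul_of_nonneg_right (by linarith) (by positivity))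
  rw [div_pow, one_pow, div_le_iff₀ (by positivity)]
  nlinarith [mul_nonneg (sq_nonneg (M : ℝ)) (add_nonneg (sq_nonneg X) (sq_nonneg Y))]
end

section
/- Let M ≥ 1 be an integer and L = 20M. Let v₁ ≠ v₂ and u₁ ≠ u₂ be points of the Euclidean plane whose coordinates are integers in {1, …, M}, and suppose the lines ℓ₁ = line(v₁,v₂) and ℓ₂ = line(u₁,u₂) are not parallel; let p be their intersection point. Let a be any point of ℝ² and d > 0 a real number such that the distance from a to ℓᵢ is less than d for i = 1, 2. Then ‖a − p‖ ≤ d·L². -/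
lemma MBoundedPoint.sub_coord {M : ℕ} {v w : EuclideanSpace ℝ (Fin 2)}
    (hv : MBoundedPoint M v) (hw : MBoundedPoint M w) :
    ∃ x y : ℤ, (w - v) 0 = x ∧ (w - v) 1 = y ∧ |(x : ℝ)| ≤ M ∧ |(y : ℝ)| ≤ M := by
  obtain ⟨a, b, ha, ha', hb, hb', h0, h1⟩ := hv
  obtain ⟨a₂, b₂, ha₂, ha₂', hb₂, hb₂', h0₂, h1₂⟩ := hw
  refine ⟨a₂ - a, b₂ - b, by simp [h0, h0₂], by simp [h1, h1₂], ?_, ?_⟩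
  · have : |a₂ - a| ≤ (M : ℤ) := abs_le.2 ⟨by omega, by omega⟩
    exact_mod_cast this
  · have : |b₂ - b| ≤ (M : ℤ) := abs_le.2 ⟨by omega, by omega⟩
    exact_mod_cast this

/-- The cross product of the direction of a line with `a - p`, for `p` on the line, is the same
for every point of the line, so it can be bounded through a point of the line close to `a`. -/
lemma abs_cross_le_s7 {v w p a : EuclideanSpace ℝ (Fin 2)} {d m x y : ℝ}
    (hx : (w - v) 0 = x) (hy : (w - v) 1 = y) (hxm : |x| ≤ m) (hym : |y| ≤ m)
    (hp : p ∈ line v w) (ha : Metric.infDist a (line v w) < d) :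
    |x * (a - p) 1 - y * (a - p) 0| ≤ 2 * m * d := by
  obtain ⟨q, hq, hqd⟩ := (Metric.infDist_lt_iff ⟨p, hp⟩).1 ha
  obtain ⟨t, rfl⟩ := hp
  obtain ⟨s, rfl⟩ := hq
  set q := v + s • (w - v) with hqdef
  rw [dist_eq_norm] at hqd
  have h0 : |(a - q) 0| ≤ d := (PiLp.norm_apply_le (a - q) 0).trans hqd.le
  have h1 : |(a - q) 1| ≤ d := (PiLp.norm_apply_le (a - q) 1).trans hqd.le
  have key : x * (a - (v + t • (w - v))) 1 - y * (a - (v + t • (w - v))) 0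
      = x * (a - q) 1 - y * (a - q) 0 := by
    rw [hqdef, ← hx, ← hy]
    simp only [PiLp.sub_apply, PiLp.add_apply, PiLp.smul_apply, smul_eq_mul]
    ring
  have hm : 0 ≤ m := (abs_nonneg x).trans hxm
  rw [key]
  calc |x * (a - q) 1 - y * (a - q) 0| ≤ |x * (a - q) 1| + |y * (a - q) 0| := abs_sub _ _
    _ ≤ m * d + m * d := by
      rw [abs_mul, abs_mul]
      gcongr
    _ = 2 * m * d := by ring

lemma cross_ne_zero {w₁ w₂ : EuclideanSpace ℝ (Fin 2)} (h : LinearIndependent ℝ ![w₁, w₂]) :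
    w₁ 0 * w₂ 1 - w₁ 1 * w₂ 0 ≠ 0 := by
  intro hD
  rw [LinearIndependent.pair_iff] at h
  -- If the determinant vanishes, its columns give linear relations between `w₁` and `w₂`.
  have hy := h (w₂ 1) (-w₁ 1) (by
    ext i; fin_cases i <;> simp <;> linarith)
  have hx := h (w₂ 0) (-w₁ 0) (by
    ext i; fin_cases i <;> simp <;> linarith)
  have := h 1 0 (by
    ext i; fin_cases i
    · simpa using hx.2
    · simpa using hy.2)
  exact one_ne_zero this.1

/-- One coordinate `e` of Cramer's rule: `D` is the determinant, `c₁`, `c₂` are the cross products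
and `z₁`, `z₂` the corresponding coordinates of the two directions. -/
lemma abs_le_of_cramer {D e c₁ c₂ z₁ z₂ m d : ℝ} (hD : 1 ≤ |D|)
    (h : D * e = c₁ * z₂ - c₂ * z₁) (hc₁ : |c₁| ≤ 2 * m * d) (hc₂ : |c₂| ≤ 2 * m * d)
    (hz₁ : |z₁| ≤ m) (hz₂ : |z₂| ≤ m) : |e| ≤ 4 * m ^ 2 * d := by
  have hmd : 0 ≤ 2 * m * d := (abs_nonneg _).trans hc₁
  calc |e| ≤ |D| * |e| := le_mul_of_one_le_left (abs_nonneg e) hD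
    _ = |c₁ * z₂ - c₂ * z₁| := by rw [← abs_mul, h]
    _ ≤ |c₁ * z₂| + |c₂ * z₁| := abs_sub _ _
    _ ≤ 2 * m * d * m + 2 * m * d * m := by
      rw [abs_mul, abs_mul]
      gcongr
    _ = 4 * m ^ 2 * d := by ring

/-- Let `M ≥ 1` and `L = 20M`. Let `ℓ₁ = line(v₁,v₂)` and `ℓ₂ = line(u₁,u₂)` be
non-parallel lines spanned by `M`-bounded points, with intersection point `p`.
If a point `a` is at distance less than `d` from both lines, then `‖a − p‖ ≤ d·L²`. -/
theorem close_to_two_lines_close_to_intersection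
    (M : ℕ) (hM : 1 ≤ M) (L : ℝ) (hL : L = 20 * M)
    (v₁ v₂ u₁ u₂ : EuclideanSpace ℝ (Fin 2))
    (hv₁ : MBoundedPoint M v₁) (hv₂ : MBoundedPoint M v₂)
    (hu₁ : MBoundedPoint M u₁) (hu₂ : MBoundedPoint M u₂)
    (hvne : v₁ ≠ v₂) (hune : u₁ ≠ u₂)
    (hpar : LinearIndependent ℝ ![v₂ - v₁, u₂ - u₁])
    (p : EuclideanSpace ℝ (Fin 2))
    (hp₁ : p ∈ line v₁ v₂) (hp₂ : p ∈ line u₁ u₂)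
    (a : EuclideanSpace ℝ (Fin 2)) (d : ℝ) (hd : 0 < d)
    (ha₁ : Metric.infDist a (line v₁ v₂) < d)
    (ha₂ : Metric.infDist a (line u₁ u₂) < d) :
    ‖a - p‖ ≤ d * L ^ 2 := by
  obtain ⟨x₁, y₁, hx₁, hy₁, hxm₁, hym₁⟩ := hv₁.sub_coord hv₂
  obtain ⟨x₂, y₂, hx₂, hy₂, hxm₂, hym₂⟩ := hu₁.sub_coord hu₂
  have hc₁ := abs_cross_le_s7 hx₁ hy₁ hxm₁ hym₁ hp₁ ha₁
  have hc₂ := abs_cross_le_s7 hx₂ hy₂ hxm₂ hym₂ hp₂ ha₂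
  have hne : (x₁ : ℝ) * y₂ - y₁ * x₂ ≠ 0 := by
    rw [← hx₁, ← hx₂, ← hy₁, ← hy₂]
    exact cross_ne_zero hpar
  have hD : (1 : ℝ) ≤ |(x₁ : ℝ) * y₂ - y₁ * x₂| := by
    have : x₁ * y₂ - y₁ * x₂ ≠ 0 := by exact_mod_cast hne
    exact_mod_cast Int.one_le_abs this
  have he0 : |(a - p) 0| ≤ 4 * (M : ℝ) ^ 2 * d :=
    abs_le_of_cramer hD (by ring) hc₁ hc₂ hxm₁ hxm₂
  have he1 : |(a - p) 1| ≤ 4 * (M : ℝ) ^ 2 * d :=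
    abs_le_of_cramer hD (by ring) hc₁ hc₂ hym₁ hym₂
  have hnorm : ‖a - p‖ ≤ |(a - p) 0| + |(a - p) 1| := by
    rw [EuclideanSpace.norm_eq, Fin.sum_univ_two, Real.norm_eq_abs, Real.norm_eq_abs]
    refine Real.sqrt_le_iff.2 ⟨by positivity, ?_⟩
    nlinarith [mul_nonneg (abs_nonneg ((a - p) 0)) (abs_nonneg ((a - p) 1))]
  have hpos : 0 ≤ (M : ℝ) ^ 2 * d := by positivity
  rw [hL]
  linarith
end

section
/- Let r₁ ≠ r₂ and x be points of the Euclidean plane with x not on line(r₁,r₂). For a point y define cone(y) = {y + a(r₁ − y) + b(r₂ − y) : a ≥ 0, b ≥ 0}. Let ℓ⁺ be the closed half-plane bounded by line(r₁,r₂) that does not contain x. Suppose g ∈ cone(x) and g lies strictly on the same side of line(r₁,r₂) as x. Then cone(x) ∩ ℓ⁺ ⊆ cone(g) ∩ ℓ⁺. -/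
/-- The cone with apex `y` bounded by the rays from `y` through `r₁` and through `r₂`. -/
def cone (y r₁ r₂ : EuclideanSpace ℝ (Fin 2)) : Set (EuclideanSpace ℝ (Fin 2)) :=
  {p | ∃ a b : ℝ, 0 ≤ a ∧ 0 ≤ b ∧ p = y + a • (r₁ - y) + b • (r₂ - y)}

/-- The signed side function of the line through `r₁` and `r₂` (a determinant):
it vanishes exactly on the line and has a constant sign on each open half-plane. -/
def sideFn (r₁ r₂ p : EuclideanSpace ℝ (Fin 2)) : ℝ :=
  (r₂ 0 - r₁ 0) * (p 1 - r₁ 1) - (r₂ 1 - r₁ 1) * (p 0 - r₁ 0)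

theorem sideFn_cone_point (r₁ r₂ x : EuclideanSpace ℝ (Fin 2)) (a b : ℝ) :
    sideFn r₁ r₂ (x + a • (r₁ - x) + b • (r₂ - x)) = (1 - a - b) * sideFn r₁ r₂ x := by
  simp [sideFn]
  ring

/-- Cone containment: let `x` be a point not on `line(r₁,r₂)`, let `ℓ⁺` be the closed
half-plane bounded by `line(r₁,r₂)` not containing `x`, and let `g ∈ cone(x)` lie
strictly on the same side of `line(r₁,r₂)` as `x`.  Then
`cone(x) ∩ ℓ⁺ ⊆ cone(g) ∩ ℓ⁺`. -/
theorem cone_containment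
    (r₁ r₂ x g : EuclideanSpace ℝ (Fin 2))
    (hne : r₁ ≠ r₂)
    (hx : x ∉ line r₁ r₂)
    (hg : g ∈ cone x r₁ r₂)
    (hside : 0 < sideFn r₁ r₂ g * sideFn r₁ r₂ x) :
    cone x r₁ r₂ ∩ {p | sideFn r₁ r₂ p * sideFn r₁ r₂ x ≤ 0} ⊆
      cone g r₁ r₂ ∩ {p | sideFn r₁ r₂ p * sideFn r₁ r₂ x ≤ 0} := by
  rintro p ⟨⟨a, b, ha, hb, hp⟩, hps⟩
  refine ⟨?_, hps⟩
  obtain ⟨c, d, hc, hd, hgx⟩ := hg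
  have hS : 0 < sideFn r₁ r₂ x * sideFn r₁ r₂ x :=
    mul_self_pos.mpr (right_ne_zero_of_mul hside.ne')
  rw [Set.mem_ofPred_eq, hp, sideFn_cone_point, mul_assoc] at hps
  rw [hgx, sideFn_cone_point, mul_assoc] at hside
  have hcd : 0 < 1 - c - d := pos_of_mul_pos_left hside hS.le
  have hab : 1 - a - b ≤ 0 := nonpos_of_mul_nonpos_left hps hS
  obtain ⟨k, hk⟩ : ∃ k, k = (1 - a - b) / (1 - c - d) := ⟨_, rfl⟩
  have hk0 : k ≤ 0 := hk ▸ div_nonpos_of_nonpos_of_nonneg hab hcd.le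
  have hkm : k * (1 - c - d) = 1 - a - b := by
    rw [hk, div_mul_cancel₀ _ hcd.ne']
  refine ⟨a - k * c, b - k * d, by nlinarith [mul_nonneg_of_nonpos_of_nonpos hk0 (neg_nonpos.mpr hc)],
    by nlinarith [mul_nonneg_of_nonpos_of_nonpos hk0 (neg_nonpos.mpr hd)], ?_⟩
  ext i
  rw [hp, hgx]
  simp only [PiLp.add_apply, PiLp.smul_apply, PiLp.sub_apply, smul_eq_mul]
  -- The weight of `g` in the new combination is `k`.
  have hw : 1 - (a - k * c) - (b - k * d) = k := by linarith
  linear_combination (-(x i + c * (r₁ i - x i) + d * (r₂ i - x i))) * hw - x i * hkm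
end

section
/- Let s and d be real numbers with 0 < s ≤ 1 and 0 ≤ 4d ≤ s. Let c ≥ 1/2 and put r₁ = (0,0), r₂ = (c,0). Let g₁ = (a₁,b₁) and g₂ = (a₂,b₂) be points with b₁ > 0, b₂ > 0, ‖g₁ − g₂‖ ≤ d, ‖g₁ − r₁‖ ≤ ‖g₁ − r₂‖, and suppose that for i = 1, 2: (aᵢ ≤ 0 or bᵢ ≥ s·aᵢ) and (aᵢ ≥ c or bᵢ ≥ s·(c − aᵢ)). Then the rays ray(g₁,r₁) = {g₁ + t(r₁ − g₁) : t ≥ 0} and ray(g₂,r₂) = {g₂ + t(r₂ − g₂) : t ≥ 0} have no common point with negative second coordinate, i.e. the two rays do not intersect on the far side of the line through r₁ and r₂. -/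
/-!
At height `-h < 0` the two rays are at abscissae `-h a₁ / b₁` and `c + h (c - a₂) / b₂`, so they
cannot meet there as soon as `a₁ / b₁ + (c - a₂) / b₂ ≥ 0`, i.e. `0 ≤ a₁ b₂ + (c - a₂) b₁`.

Since `g₁` is at least as close to `r₁` as to `r₂`, we have `a₁ ≤ c / 2`; hence `|a₁| ≤ c - a₁`, and
the wedge condition at `r₂` gives `b₁ ≥ s (c - a₁)`. Writing `g₂ = g₁ + (u, v)` with
`|u|, |v| ≤ d ≤ s / 4`, the expression above equals `b₁ (c - u) + a₁ v`. As `c - u ≥ 1 / 4`,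
the first term is at least `(s / 4) (c - a₁)`, which dominates `|a₁ v| ≤ (s / 4) |a₁|`.
-/

/-- The ray with apex `p` through `q`. -/
def ray (p q : EuclideanSpace ℝ (Fin 2)) : Set (EuclideanSpace ℝ (Fin 2)) :=
  {z | ∃ t : ℝ, 0 ≤ t ∧ z = p + t • (q - p)}

/-- The directions of the two rays do not converge below the axis: the rays from `(a₁, b₁)`
through `(0, 0)` and from `(a₂, b₂)` through `(c, 0)` satisfy `-a₁ / b₁ ≤ (c - a₂) / b₂` when
`b₁` and `b₂` are positive; this is stated without denominators. -/
lemma directions_diverge {s d c a₁ b₁ a₂ b₂ : ℝ} (hs0 : 0 < s) (hs1 : s ≤ 1)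
    (hds : 4 * d ≤ s) (hc : 1 / 2 ≤ c) (hu : |a₁ - a₂| ≤ d) (hv : |b₁ - b₂| ≤ d)
    (ha : a₁ ≤ c / 2) (hb : s * (c - a₁) ≤ b₁) :
    0 ≤ a₁ * b₂ + (c - a₂) * b₁ := by
  have hcu : 1 / 4 ≤ c - (a₂ - a₁) := by linarith [neg_abs_le (a₁ - a₂)]
  have hca : |a₁| ≤ c - a₁ := abs_le.2 ⟨by linarith, by linarith⟩
  have hca0 : 0 ≤ c - a₁ := (abs_nonneg _).trans hca
  have h₁ : s * (c - a₁) * (1 / 4) ≤ b₁ * (c - (a₂ - a₁)) :=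
    mul_le_mul hb hcu (by norm_num) ((mul_nonneg hs0.le hca0).trans hb)
  have h₂ : |a₁ * (b₁ - b₂)| ≤ (c - a₁) * (s / 4) := by
    rw [abs_mul]
    exact mul_le_mul hca (by linarith) (abs_nonneg _) hca0
  linarith [le_abs_self (a₁ * (b₁ - b₂))]

/-- Cone-property (divergence of the rays): let `0 < s ≤ 1`, `0 ≤ 4d ≤ s`, `c ≥ 1/2`,
`r₁ = (0,0)`, `r₂ = (c,0)`, and let `g₁ = (a₁,b₁)`, `g₂ = (a₂,b₂)` be points above the
line `Y = 0`, at distance at most `d` from each other, with `g₁` at least as close to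
`r₁` as to `r₂`, and both outside the two wedges of slope `s` with apexes `r₁` and `r₂`
(i.e. for `i = 1,2`: (`aᵢ ≤ 0` or `bᵢ ≥ s·aᵢ`) and (`aᵢ ≥ c` or `bᵢ ≥ s·(c − aᵢ)`)).
Then the rays `ray(g₁,r₁)` and `ray(g₂,r₂)` have no common point with negative second
coordinate. -/
theorem rays_do_not_meet_beyond_line
    (s d c : ℝ) (hs0 : 0 < s) (hs1 : s ≤ 1) (hd0 : 0 ≤ d) (hds : 4 * d ≤ s)
    (hc : 1 / 2 ≤ c)
    (r₁ r₂ g₁ g₂ : EuclideanSpace ℝ (Fin 2))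
    (hr₁0 : r₁ 0 = 0) (hr₁1 : r₁ 1 = 0)
    (hr₂0 : r₂ 0 = c) (hr₂1 : r₂ 1 = 0)
    (hb₁ : 0 < g₁ 1) (hb₂ : 0 < g₂ 1)
    (hdist : ‖g₁ - g₂‖ ≤ d)
    (hcloser : ‖g₁ - r₁‖ ≤ ‖g₁ - r₂‖)
    (hwedge₁₁ : g₁ 0 ≤ 0 ∨ s * g₁ 0 ≤ g₁ 1)
    (hwedge₁₂ : c ≤ g₁ 0 ∨ s * (c - g₁ 0) ≤ g₁ 1)
    (hwedge₂₁ : g₂ 0 ≤ 0 ∨ s * g₂ 0 ≤ g₂ 1)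
    (hwedge₂₂ : c ≤ g₂ 0 ∨ s * (c - g₂ 0) ≤ g₂ 1) :
    ∀ p : EuclideanSpace ℝ (Fin 2),
      p ∈ ray g₁ r₁ → p ∈ ray g₂ r₂ → ¬ (p 1 < 0) := by
  rintro p ⟨t₁, -, rfl⟩ ⟨t₂, -, h⟩ hneg
  have hx := congrArg (fun z : EuclideanSpace ℝ (Fin 2) => z 0) h
  have hy := congrArg (fun z : EuclideanSpace ℝ (Fin 2) => z 1) h
  simp only [PiLp.add_apply, PiLp.smul_apply, PiLp.sub_apply, smul_eq_mul, hr₁0, hr₁1, hr₂0,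
    hr₂1] at hx hy hneg
  have hu : |g₁ 0 - g₂ 0| ≤ d := by
    simpa using (PiLp.norm_apply_le (g₁ - g₂) 0).trans hdist
  have hv : |g₁ 1 - g₂ 1| ≤ d := by
    simpa using (PiLp.norm_apply_le (g₁ - g₂) 1).trans hdist
  have ha : g₁ 0 ≤ c / 2 := by
    have hsq := pow_le_pow_left₀ (norm_nonneg _) hcloser 2
    simp only [EuclideanSpace.real_norm_sq_eq, Fin.sum_univ_two, PiLp.sub_apply, hr₁0, hr₁1, hr₂0,
      hr₂1] at hsq
    nlinarith
  have hb : s * (c - g₁ 0) ≤ g₁ 1 := hwedge₁₂.resolve_left (by linarith)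
  have hD := directions_diverge hs0 hs1 hds hc hu hv ha hb
  have hk : 0 < t₂ - 1 := by
    by_contra! hk
    nlinarith [mul_nonneg hb₂.le (sub_nonneg.2 (sub_nonpos.1 hk))]
  -- Eliminating `t₁` from the two coordinate equations.
  have key : (t₂ - 1) * (g₁ 0 * g₂ 1 + (c - g₂ 0) * g₁ 1) = -(c * g₁ 1) := by
    linear_combination g₁ 0 * hy - g₁ 1 * hx
  linarith [mul_nonneg hk.le hD, mul_pos (show 0 < c by linarith) hb₁]
end

section
/- Let M ≥ 1 be an integer and L = 20M (so L ≥ 20). Let c, s, α be real numbers with c ≥ 1, α > 0, 8Lα ≤ s and s ≤ L⁻³. Put r₁ = (0,0) and r₂ = (c,0). Define the wedges W₁ = {(X,Y) : X ≥ 0 and 0 ≤ Y ≤ s·X}, W₂ = {(X,Y) : X ≤ c and 0 ≤ Y ≤ s·(c − X)}, and the embiggened wedges E₁ = {(X,Y) : X ≥ L⁻² and 0 ≤ Y ≤ (s/2)·(X − L⁻²)}, E₂ = {(X,Y) : X ≤ c − L⁻² and 0 ≤ Y ≤ (s/2)·(c − L⁻² − X)}. Let x = (x₁,x₂) be a point with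 x₂ > 0, 1/L ≤ ‖x − r₁‖ ≤ L, ‖x − r₂‖ ≥ 1/L, x ∉ W₁ and x ∉ W₂. Then every point g with ‖g − x‖ ≤ α satisfies g ∉ E₁ and g ∉ E₂. -/
/-!
The two halves of the conclusion are mirror images under `X ↦ c - X`, so both reduce to the
coordinate lemma `not_mem_embiggened_wedge`, stated for a wedge with apex at the origin.

The idea: put `t = 1 / L` and suppose `g` lies in the embiggened wedge, which has slope `s / 2` and
apex `(t ^ 2, 0)`.  Since `α ≤ t ^ 2`, the point `x = (a, b)` still has `a ≥ 0`, so `x ∉ W` forces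
`b > s * a`.  On the other hand `x` is within `α` of the line of slope `s / 2`, so
`b ≤ s * a / 2 + α`.  The two lines separate linearly, hence this is possible only for
`s * a / 2 < α`, and then `8 * α ≤ s * t` gives `a < t / 4` and `b < t / 4`: the point `x` is
closer than `1 / L` to the apex of `W`, a contradiction.
-/

/-- A point `(u, v)` within `α` (in each coordinate) of a point `(a, b)` that is above the wedge of
slope `s` at the origin and at distance at least `t` from the origin does not lie in the wedge of
slope `s / 2` with apex `(t ^ 2, 0)`. -/
theorem not_mem_embiggened_wedge {t s α a b u v : ℝ} (ht : 0 < t) (ht1 : t ≤ 1)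
    (hα : 0 < α) (hαs : 8 * α ≤ s * t) (hs : s ≤ t ^ 3) (hb : 0 < b)
    (hdist : t ^ 2 ≤ a ^ 2 + b ^ 2) (hW : ¬ (0 ≤ a ∧ 0 ≤ b ∧ b ≤ s * a))
    (hu : |u - a| ≤ α) (hv : |v - b| ≤ α) :
    ¬ (t ^ 2 ≤ u ∧ 0 ≤ v ∧ v ≤ s / 2 * (u - t ^ 2)) := by
  rintro ⟨h1, -, h3⟩
  obtain ⟨hu1, hu2⟩ := abs_le.mp hu
  obtain ⟨hv1, hv2⟩ := abs_le.mp hv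
  have hspos : 0 < s := pos_of_mul_pos_left (by linarith : 0 < s * t) ht.le
  have hs1 : s ≤ 1 := hs.trans (pow_le_one₀ ht.le ht1)
  have hst : s * t ≤ t ^ 2 := by
    have : t ^ 3 ≤ t ^ 1 := pow_le_pow_of_le_one ht.le ht1 (by norm_num)
    nlinarith
  have ha : 0 ≤ a := by linarith
  have hba : s * a < b := by
    by_contra! h
    exact hW ⟨ha, hb.le, h⟩
  -- The apex shift `t ^ 2` absorbs the horizontal displacement `α`.
  have hline : s / 2 * (u - t ^ 2) ≤ s / 2 * a :=
    mul_le_mul_of_nonneg_left (by linarith) (by linarith)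
  have hsa : s * (4 * a) < s * t := by linarith
  have hat : 4 * a < t := lt_of_mul_lt_mul_left hsa hspos.le
  have hbt : 4 * b < t := by
    have : s * t ≤ 1 * t := mul_le_mul_of_nonneg_right hs1 ht.le
    linarith
  nlinarith


/-- Grid outside bad region: let `M ≥ 1`, `L = 20M`, `c ≥ 1`, `α > 0`, `8Lα ≤ s ≤ L⁻³`,
`r₁ = (0,0)`, `r₂ = (c,0)`.  Define the wedges
`W₁ = {(X,Y) : X ≥ 0 ∧ 0 ≤ Y ≤ s·X}`, `W₂ = {(X,Y) : X ≤ c ∧ 0 ≤ Y ≤ s·(c − X)}`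
and the embiggened wedges
`E₁ = {(X,Y) : X ≥ L⁻² ∧ 0 ≤ Y ≤ (s/2)·(X − L⁻²)}`,
`E₂ = {(X,Y) : X ≤ c − L⁻² ∧ 0 ≤ Y ≤ (s/2)·(c − L⁻² − X)}`.
If `x` has positive second coordinate, `1/L ≤ ‖x − r₁‖ ≤ L`, `‖x − r₂‖ ≥ 1/L`,
`x ∉ W₁` and `x ∉ W₂`, then every point `g` with `‖g − x‖ ≤ α` satisfies `g ∉ E₁`
and `g ∉ E₂`. -/
theorem grid_outside_bad_region
    (M : ℕ) (hM : 1 ≤ M) (L : ℝ) (hL : L = 20 * M)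
    (c s α : ℝ) (hc : 1 ≤ c) (hα0 : 0 < α)
    (hαs : 8 * L * α ≤ s) (hsL : s ≤ (L ^ 3)⁻¹)
    (r₁ r₂ : EuclideanSpace ℝ (Fin 2))
    (hr₁0 : r₁ 0 = 0) (hr₁1 : r₁ 1 = 0)
    (hr₂0 : r₂ 0 = c) (hr₂1 : r₂ 1 = 0)
    (x : EuclideanSpace ℝ (Fin 2))
    (hx2 : 0 < x 1)
    (hxr₁lb : 1 / L ≤ ‖x - r₁‖) (hxr₁ub : ‖x - r₁‖ ≤ L)
    (hxr₂ : 1 / L ≤ ‖x - r₂‖)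
    (hxW₁ : ¬ (0 ≤ x 0 ∧ 0 ≤ x 1 ∧ x 1 ≤ s * x 0))
    (hxW₂ : ¬ (x 0 ≤ c ∧ 0 ≤ x 1 ∧ x 1 ≤ s * (c - x 0))) :
    ∀ g : EuclideanSpace ℝ (Fin 2), ‖g - x‖ ≤ α →
      ¬ ((L ^ 2)⁻¹ ≤ g 0 ∧ 0 ≤ g 1 ∧ g 1 ≤ (s / 2) * (g 0 - (L ^ 2)⁻¹)) ∧
      ¬ (g 0 ≤ c - (L ^ 2)⁻¹ ∧ 0 ≤ g 1 ∧ g 1 ≤ (s / 2) * (c - (L ^ 2)⁻¹ - g 0)) := by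
  have hM' : (1 : ℝ) ≤ M := by exact_mod_cast hM
  have hL1 : 1 ≤ L := by linarith
  have hL0 : 0 < L := by linarith
  have ht : 0 < L⁻¹ := inv_pos.mpr hL0
  have ht1 : L⁻¹ ≤ 1 := inv_le_one_of_one_le₀ hL1
  have hα : 8 * α ≤ s * L⁻¹ := by
    rw [← div_eq_mul_inv, le_div_iff₀ hL0]
    linarith
  rw [← inv_pow] at hsL
  have sq_dist (r : EuclideanSpace ℝ (Fin 2)) (h : 1 / L ≤ ‖x - r‖) :
      L⁻¹ ^ 2 ≤ (x 0 - r 0) ^ 2 + (x 1 - r 1) ^ 2 := by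
    have h' : (1 / L) ^ 2 ≤ ‖x - r‖ ^ 2 := pow_le_pow_left₀ (by positivity) h 2
    simpa [EuclideanSpace.norm_sq_eq, Fin.sum_univ_two] using h'
  have hd₁ := sq_dist r₁ hxr₁lb
  have hd₂ := sq_dist r₂ hxr₂
  rw [hr₁0, hr₁1, sub_zero, sub_zero] at hd₁
  rw [hr₂0, hr₂1, sub_zero] at hd₂
  intro g hg
  have hcoord (i : Fin 2) : |g i - x i| ≤ α := (PiLp.norm_apply_le (g - x) i).trans hg
  rw [← inv_pow]
  refine ⟨not_mem_embiggened_wedge ht ht1 hα0 hα hsL hx2 hd₁ hxW₁ (hcoord 0) (hcoord 1), ?_⟩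
  -- Reflect in the vertical line `X = c / 2`, which carries `r₂` to the origin.
  have h := not_mem_embiggened_wedge (a := c - x 0) (u := c - g 0) ht ht1 hα0 hα hsL hx2
    (by linarith [sub_sq_comm (x 0) c]) (fun ⟨h1, h2⟩ => hxW₂ ⟨by linarith, h2⟩)
    (by rw [sub_sub_sub_cancel_left, abs_sub_comm]; exact hcoord 0) (hcoord 1)
  rintro ⟨h1, h2, h3⟩
  exact h ⟨by linarith, h2, by rwa [sub_right_comm]⟩
end

section
/- Let M ≥ 1 be an integer and L = 20M. Let r, w, q be points of the Euclidean plane whose coordinates are integers in {1, …, M}, with w ≠ r and q not on line(r,w). Then dist(q, line(r,w)) ≥ L⁻² · ‖q − r‖. (Equivalently, the sine of the angle at r between segment(r,q) and line(r,w) is at least L⁻².) -/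
lemma norm_sub_sq_fin_two (p p' : EuclideanSpace ℝ (Fin 2)) :
    ‖p - p'‖ ^ 2 = (p 0 - p' 0) ^ 2 + (p 1 - p' 1) ^ 2 := by
  simp [EuclideanSpace.real_norm_sq_eq, Fin.sum_univ_two]

lemma MBoundedPoint.norm_sub_le {M : ℕ} {p p' : EuclideanSpace ℝ (Fin 2)}
    (hp : MBoundedPoint M p) (hp' : MBoundedPoint M p') : ‖p - p'‖ ≤ 20 * M := by
  obtain ⟨a, b, ha, ha', hb, hb', h0, h1⟩ := hp
  obtain ⟨a₂, b₂, hc, hc', hd, hd', h2, h3⟩ := hp'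
  refine (sq_le_sq₀ (by positivity) (by positivity)).1 ?_
  rw [norm_sub_sq_fin_two, h0, h1, h2, h3]
  have e1 : (a - a₂) ^ 2 ≤ (M : ℤ) ^ 2 := sq_le_sq' (by linarith) (by linarith)
  have e2 : (b - b₂) ^ 2 ≤ (M : ℤ) ^ 2 := sq_le_sq' (by linarith) (by linarith)
  have e3 : (a - a₂) ^ 2 + (b - b₂) ^ 2 ≤ (20 * (M : ℤ)) ^ 2 := by nlinarith [sq_nonneg (M : ℤ)]
  -- Restated over `ℝ`: the goal is over the dependent family underlying `EuclideanSpace`, which is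
  -- only definitionally `ℝ` and opaque to `norm_cast`.
  have e4 : ((a : ℝ) - a₂) ^ 2 + ((b : ℝ) - b₂) ^ 2 ≤ (20 * (M : ℝ)) ^ 2 := by exact_mod_cast e3
  exact e4

/-- A vanishing determinant puts `q` on the line: the witness is the parameter of its orthogonal
projection. -/
lemma det_ne_zero_of_notMem_line {r w q : EuclideanSpace ℝ (Fin 2)}
    (hwr : w ≠ r) (hql : q ∉ line r w) :
    (w 0 - r 0) * (q 1 - r 1) - (w 1 - r 1) * (q 0 - r 0) ≠ 0 := by
  intro hD
  have hpos : 0 < (w 0 - r 0) ^ 2 + (w 1 - r 1) ^ 2 := by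
    rw [← norm_sub_sq_fin_two]
    have := norm_pos_iff.2 (sub_ne_zero.2 hwr)
    positivity
  refine hql ⟨((q 0 - r 0) * (w 0 - r 0) + (q 1 - r 1) * (w 1 - r 1)) /
    ((w 0 - r 0) ^ 2 + (w 1 - r 1) ^ 2), ?_⟩
  ext i
  fin_cases i
  · simp
    field_simp
    linear_combination (-(w 1 - r 1)) * hD
  · simp
    field_simp
    linear_combination (w 0 - r 0) * hD

/-- Integrality of the determinant upgrades its nonvanishing to a lower bound. -/
lemma one_le_det_sq {M : ℕ} {r w q : EuclideanSpace ℝ (Fin 2)}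
    (hr : MBoundedPoint M r) (hw : MBoundedPoint M w) (hq : MBoundedPoint M q)
    (hwr : w ≠ r) (hql : q ∉ line r w) :
    1 ≤ ((w 0 - r 0) * (q 1 - r 1) - (w 1 - r 1) * (q 0 - r 0)) ^ 2 := by
  have hD := det_ne_zero_of_notMem_line hwr hql
  obtain ⟨a, b, -, -, -, -, h0, h1⟩ := hr
  obtain ⟨c, d, -, -, -, -, h2, h3⟩ := hw
  obtain ⟨e, f, -, -, -, -, h4, h5⟩ := hq
  rw [h0, h1, h2, h3, h4, h5] at hD ⊢
  -- As in `MBoundedPoint.norm_sub_le`, the types are restated as `ℝ` for `norm_cast`.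
  have hR : ((c : ℝ) - a) * ((f : ℝ) - b) - ((d : ℝ) - b) * ((e : ℝ) - a) ≠ 0 := hD
  have hZ : (c - a) * (f - b) - (d - b) * (e - a) ≠ 0 := by exact_mod_cast hR
  have h1Z : 1 ≤ ((c - a) * (f - b) - (d - b) * (e - a)) ^ 2 :=
    Int.add_one_le_iff.2 (sq_pos_of_ne_zero hZ)
  have h1R : (1 : ℝ) ≤ (((c : ℝ) - a) * ((f : ℝ) - b) - ((d : ℝ) - b) * ((e : ℝ) - a)) ^ 2 := by
    exact_mod_cast h1Z
  exact h1R

/-- Let `M ≥ 1` and `L = 20M`. If `r, w, q` are `M`-bounded points with `w ≠ r` and `q`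
not on `line(r,w)`, then `dist(q, line(r,w)) ≥ L⁻² · ‖q − r‖`; equivalently, the sine of
the angle at `r` between `segment(r,q)` and `line(r,w)` is at least `L⁻²`. -/
theorem sin_angle_at_vertex_ge
    (M : ℕ) (hM : 1 ≤ M) (L : ℝ) (hL : L = 20 * M)
    (r w q : EuclideanSpace ℝ (Fin 2))
    (hr : MBoundedPoint M r) (hw : MBoundedPoint M w) (hq : MBoundedPoint M q)
    (hwr : w ≠ r) (hql : q ∉ line r w) :
    (L ^ 2)⁻¹ * ‖q - r‖ ≤ Metric.infDist q (line r w) := by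
  have hLpos : 0 < L := by
    have : (1 : ℝ) ≤ M := by exact_mod_cast hM
    rw [hL]; linarith
  have hd : ‖w - r‖ ≤ L := hL ▸ hw.norm_sub_le hr
  have hv : ‖q - r‖ ≤ L := hL ▸ hq.norm_sub_le hr
  have hD := one_le_det_sq hr hw hq hwr hql
  -- On the empty set `infDist` is `0`, so the pointwise bound needs a point of the line.
  have hne : (line r w).Nonempty := ⟨r, 0, by simp⟩
  rw [Metric.le_infDist hne]
  rintro p ⟨t, rfl⟩
  rw [dist_eq_norm]
  set p := r + t • (w - r) with hp
  have h0 : p 0 = r 0 + t * (w 0 - r 0) := by simp [hp]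
  have h1 : p 1 = r 1 + t * (w 1 - r 1) := by simp [hp]
  have hCS : 1 ≤ (‖w - r‖ * ‖q - p‖) ^ 2 := by
    rw [mul_pow, norm_sub_sq_fin_two, norm_sub_sq_fin_two, h0, h1]
    -- Lagrange's identity: the two sides of Cauchy–Schwarz differ by the square of `⟪d, q - p⟫`.
    nlinarith [sq_nonneg ((w 0 - r 0) * (q 0 - (r 0 + t * (w 0 - r 0))) +
      (w 1 - r 1) * (q 1 - (r 1 + t * (w 1 - r 1))))]
  have hone : 1 ≤ L * ‖q - p‖ :=
    ((one_le_sq_iff₀ (by positivity)).1 hCS).trans (by gcongr)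
  rw [inv_mul_le_iff₀ (by positivity)]
  nlinarith
end
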